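/- The group G_A is called level-transitive if for every n ≥ 0 the action of G_A on the set X^n of words of length n is transitive. There is a computable function that, given (an encoding of) a bounded invertible Mealy automaton A, decides whether the group G_A is level-transitive. -/

import Mathlib

/-- A Mealy automaton over alphabet `X` with state set `S`:
the transition-output function sends `(s, x)` to `(output letter, next state)`. -/
structure Mealy (S X : Type*) where
  step : S → X → X × S

namespace Mealy

variable {S X : Type*}

/-- The section `s|_v`: the state reached after processing the word `v` from state `s`. -/
def sec (A : Mealy S X) (s : S) : List X → S
  | [] => s
  | x :: v => A.sec (A.step s x).2 v

/-- The action of a state on finite words (lists of letters, read left to right). -/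
def act (A : Mealy S X) (s : S) : List X → List X
  | [] => []
  | x :: v => (A.step s x).1 :: A.act (A.step s x).2 v

/-- A state is trivial if it acts on `X^*` as the identity. -/
def IsTrivialState (A : Mealy S X) (s : S) : Prop := ∀ v : List X, A.act s v = v

/-- An automaton is invertible if every state acts on the letters by a permutation. -/
def Invertible (A : Mealy S X) : Prop :=
  ∀ s : S, Function.Bijective fun x : X => (A.step s x).1

/-- The automaton group `G_A`: the subgroup of permutations of `X^*` generated by
the permutations defined by the states of `A`. -/
def autGroup (A : Mealy S X) : Subgroup (Equiv.Perm (List X)) :=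
  Subgroup.closure { f : Equiv.Perm (List X) | ∃ s : S, ∀ v : List X, f v = A.act s v }

/-- A left-infinite sequence `…x₂x₁` is encoded as `p : ℕ → X` with `p 0 = x₁`, `p 1 = x₂`, ….
It is post-critical if it is the sequence of input labels or of output labels of a
left-infinite directed path in `A` ending at a non-trivial state. -/
def IsPostCritical (A : Mealy S X) (p : ℕ → X) : Prop :=
  ∃ (σ : ℕ → S) (inp out : ℕ → X),
    (∀ n, A.step (σ (n + 1)) (inp n) = (out n, σ n)) ∧
      ¬A.IsTrivialState (σ 0) ∧ (p = inp ∨ p = out)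

/-- The post-critical set of `A`. -/
def PostCriticalSet (A : Mealy S X) : Set (ℕ → X) := { p | A.IsPostCritical p }

/-- An automaton is bounded if its post-critical set is finite. -/
def Bounded (A : Mealy S X) : Prop := A.PostCriticalSet.Finite

/-- The length-`n` suffix (as a finite word, read left to right) of a left-infinite
sequence `…x₂x₁` encoded as `p : ℕ → X`: the word `xₙ…x₂x₁`. -/
def lsuffix (p : ℕ → X) (n : ℕ) : List X := (List.range n).reverse.map p

/-- A finite word is post-critical if it is a suffix of some post-critical sequence. -/
def IsPostCriticalWord (A : Mealy S X) (v : List X) : Prop :=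
  ∃ p : ℕ → X, A.IsPostCritical p ∧ v = lsuffix p v.length

/-- The base relation for `e`-equivalence: `v ≈ u` if some state `s` satisfies
`s|_v` trivial and `s(v) = u`, or `s|_u` trivial and `s(u) = v`. -/
def ERel (A : Mealy S X) (v u : List X) : Prop :=
  ∃ s : S, (A.IsTrivialState (A.sec s v) ∧ A.act s v = u) ∨
    (A.IsTrivialState (A.sec s u) ∧ A.act s u = v)

/-- `e`-equivalence: the equivalence relation generated by `≈`. -/
def EEquiv (A : Mealy S X) : List X → List X → Prop := Relation.EqvGen A.ERel

/-- The `e`-orbit of a word. -/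
def eOrbit (A : Mealy S X) (v : List X) : Set (List X) := { u | A.EEquiv v u }

/-- The orbit of a finite word under the automaton group. -/
def orbit (A : Mealy S X) (v : List X) : Set (List X) := { u | ∃ g ∈ A.autGroup, g v = u }

/-- Reachability by a directed path in the automaton. -/
def Reaches (A : Mealy S X) : S → S → Prop :=
  Relation.ReflTransGen fun a b => ∃ x : X, (A.step a x).2 = b

/-- The states of the circuit part `C(A)`: states reachable by a directed path
from some directed cycle of `A`. -/
def circuitStates (A : Mealy S X) : Set S :=
  { s | ∃ t : S, (∃ x : X, A.Reaches (A.step t x).2 t) ∧ A.Reaches t s }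

/-- The circuit part `C(A)` as a subautomaton. -/
def circuitPart (A : Mealy S X) : Mealy A.circuitStates X where
  step s x :=
    ((A.step s.1 x).1,
      ⟨(A.step s.1 x).2, by
        obtain ⟨t, hc, hr⟩ := s.2
        exact ⟨t, hc, hr.tail ⟨x, rfl⟩⟩⟩)

/-- The subautomaton induced on a subset of states closed under transitions. -/
def subautomaton (A : Mealy S X) (T : Set S)
    (hT : ∀ s ∈ T, ∀ x : X, (A.step s x).2 ∈ T) : Mealy T X where
  step s x := ((A.step s.1 x).1, ⟨(A.step s.1 x).2, hT s.1 s.2 x⟩)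

/-- The extension of a length- and prefix-preserving map on finite words to
right-infinite sequences (letter by letter). -/
def extOmega (f : List X → List X) (w : ℕ → X) : ℕ → X :=
  fun n => (f ((List.range (n + 1)).map w)).getD n (w n)

/-- The orbit of a right-infinite sequence under the automaton group. -/
def orbitOmega (A : Mealy S X) (w : ℕ → X) : Set (ℕ → X) :=
  { w' | ∃ g ∈ A.autGroup, w' = extOmega (⇑(g : Equiv.Perm (List X))) w }

/-- The group `G_A` is level-transitive if it acts transitively on each level `X^n`. -/
def LevelTransitive (A : Mealy S X) : Prop :=
  ∀ v u : List X, v.length = u.length → ∃ g ∈ A.autGroup, g v = u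

end Mealy

/-- The run of a deterministic finite-state machine on a right-infinite input:
`dfaRun δ q₀ w n` is the state after reading the first `n` letters. -/
def dfaRun {Q X : Type*} (δ : Q → X → Q) (q₀ : Q) (w : ℕ → X) : ℕ → Q
  | 0 => q₀
  | n + 1 => δ (dfaRun δ q₀ w n) (w n)

/-- A concrete encoding of an invertible Mealy automaton (with state set `Fin n`
over alphabet `Fin k`) as a natural number. -/
def encodeAut (n k : ℕ) (step : Fin n → Fin k → Fin k × Fin n) : ℕ :=
  Nat.pair n (Nat.pair k (Encodable.encode
    ((List.finRange n).flatMap fun s =>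
      (List.finRange k).map fun x =>
        Nat.pair ((step s x).1 : ℕ) ((step s x).2 : ℕ))))

/-!
`G_A` is level-transitive iff all its levels have connected Schreier graphs. Edges `w → s(w)` with
trivial section `s|_w` stay inside an `e`-class, and survive the passage from `w` to `wz` for every
`z`. So connectedness of a level `m + d` depends only on `d` and on a pattern at level `m`: the
`e`-classes and the edges between them, marked with their sections. If each connected level has a
bounded number of `e`-classes, then there are finitely many patterns; once two levels share a
pattern, the deeper of the two can be replaced by the other, which reduces connectedness of all
levels to that of boundedly many.

On a connected level every `e`-class contains an endpoint of an edge with non-trivial section,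
unless there is only one class. Such edges are few: a state reading a long word `w` with
non-trivial section enters a cycle soon after the start of `w`, and is on a cycle again shortly
before the end. By boundedness, a left-infinite path that ends with a non-trivial state on a cycle
has a periodic label, because going round that cycle repeatedly yields only finitely many
post-critical sequences. Following a path into the first cycle by the middle part of `w`, one sees
that this part is determined by its length and by the letters near the two ends of `w`.
-/

section General

theorem exists_lt_le_card_map_eq {α : Type*} [Finite α] (f : ℕ → α) :
    ∃ i j, i < j ∧ j ≤ Nat.card α ∧ f i = f j := by
  have hinj : ¬Function.Injective fun i : Fin (Nat.card α + 1) => f i := fun hinj => by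
    simpa using Nat.card_le_card_of_injective _ hinj
  obtain ⟨i, j, heq, hne⟩ := Function.not_injective_iff.mp hinj
  rcases hne.lt_or_gt with hij | hji
  · exact ⟨i, j, hij, by omega, heq⟩
  · exact ⟨j, i, hji, by omega, heq.symm⟩

theorem take_eq_take_of_getElem?_eq {α : Type*} {n : ℕ} {v v' : List α}
    (h : ∀ i < n, v[i]? = v'[i]?) : v.take n = v'.take n := by
  refine List.ext_getElem? fun i => ?_
  by_cases hi : i < n
  · simpa only [List.getElem?_take_of_lt hi] using h i hi
  · simp only [List.getElem?_take_eq_none (not_lt.mp hi)]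

theorem getD_flatMap_of_length_eq {α β : Type*} (l : List α) (g : α → List β) {k : ℕ}
    (hg : ∀ a, (g a).length = k) {i x : ℕ} (hi : i < l.length) (hx : x < k) (d : β) :
    (l.flatMap g).getD (i * k + x) d = (g l[i]).getD x d := by
  induction l generalizing i with
  | nil => simp at hi
  | cons a l ih =>
    rw [List.flatMap_cons]
    cases i with
    | zero => rw [List.getD_append _ _ _ _ (by rw [hg]; omega)]; simp
    | succ i =>
      rw [List.getD_append_right _ _ _ _ (by rw [hg, Nat.succ_mul]; omega), hg,
        show (i + 1) * k + x - k = i * k + x by rw [Nat.succ_mul]; omega]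
      simpa using ih (by simpa using hi)

end General

/-! ### Schreier graphs of the levels -/

namespace Mealy

section Words

variable {S X : Type*} (A : Mealy S X)

theorem sec_append (s : S) (v w : List X) : A.sec s (v ++ w) = A.sec (A.sec s v) w := by
  induction v generalizing s with
  | nil => rfl
  | cons x _ ih => exact ih _

theorem act_append (s : S) (v w : List X) :
    A.act s (v ++ w) = A.act s v ++ A.act (A.sec s v) w := by
  induction v generalizing s with
  | nil => rfl
  | cons x _ ih => exact congrArg _ (ih _)

@[simp]
theorem length_act (s : S) (v : List X) : (A.act s v).length = v.length := by
  induction v generalizing s with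
  | nil => rfl
  | cons x v ih => simp [act, ih]

theorem sec_act_eq_foldl (s : S) (v : List X) :
    (A.sec s v, A.act s v) =
      v.foldl (fun p x => ((A.step p.1 x).2, p.2 ++ [(A.step p.1 x).1])) (s, []) := by
  induction v using List.reverseRecOn with
  | nil => rfl
  | append_singleton v x ih =>
    rw [List.foldl_append, ← ih, sec_append, act_append]
    rfl

theorem act_map {S' X' : Type*} (A' : Mealy S' X') (f : S → S') (g : X → X')
    (h : ∀ s x, A'.step (f s) (g x) = (g (A.step s x).1, f (A.step s x).2))
    (s : S) (v : List X) : A'.act (f s) (v.map g) = (A.act s v).map g := by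
  induction v generalizing s with
  | nil => rfl
  | cons x v ih => simp only [act, List.map_cons, h, ih]

variable {A}

theorem IsTrivialState.sec {s : S} (hs : A.IsTrivialState s) (v : List X) :
    A.IsTrivialState (A.sec s v) := fun w => by
  have h := hs (v ++ w)
  rwa [act_append, hs v, List.append_cancel_left_eq] at h

theorem eEquiv_act {s : S} {v : List X} (h : A.IsTrivialState (A.sec s v)) :
    A.EEquiv v (A.act s v) :=
  .rel _ _ ⟨s, .inl ⟨h, rfl⟩⟩

theorem ERel.append {v u : List X} (h : A.ERel v u) (z : List X) :
    A.ERel (v ++ z) (u ++ z) := by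
  obtain ⟨s, ⟨ht, rfl⟩ | ⟨ht, rfl⟩⟩ := h
  · exact ⟨s, .inl ⟨A.sec_append s v z ▸ ht.sec z, by rw [act_append, ht z]⟩⟩
  · exact ⟨s, .inr ⟨A.sec_append s u z ▸ ht.sec z, by rw [act_append, ht z]⟩⟩

theorem EEquiv.append {v u : List X} (h : A.EEquiv v u) (z : List X) :
    A.EEquiv (v ++ z) (u ++ z) := by
  induction h with
  | rel v u h => exact .rel _ _ (h.append z)
  | refl v => exact .refl _
  | symm v u _ ih => exact .symm _ _ ih
  | trans v u w _ _ ih₁ ih₂ => exact .trans _ _ _ ih₁ ih₂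

theorem EEquiv.length_eq {v u : List X} (h : A.EEquiv v u) : v.length = u.length := by
  induction h with
  | rel v u h => obtain ⟨s, ⟨_, rfl⟩ | ⟨_, rfl⟩⟩ := h <;> simp
  | refl v => rfl
  | symm v u _ ih => exact ih.symm
  | trans v u w _ _ ih₁ ih₂ => exact ih₁.trans ih₂

theorem Invertible.act_injective (hA : A.Invertible) (s : S) : Function.Injective (A.act s) := by
  intro v
  induction v generalizing s with
  | nil =>
    rintro (_ | ⟨y, u⟩) h
    · rfl
    · exact absurd h (by simp [act])
  | cons x v ih =>
    rintro (_ | ⟨y, u⟩) h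
    · exact absurd h (by simp [act])
    · obtain ⟨hxy, hvu⟩ := List.cons.inj h
      obtain rfl := (hA s).injective hxy
      rw [ih _ hvu]

theorem Invertible.act_surjective (hA : A.Invertible) (s : S) : Function.Surjective (A.act s) := by
  intro u
  induction u generalizing s with
  | nil => exact ⟨[], rfl⟩
  | cons y u ih =>
    obtain ⟨x, rfl⟩ := (hA s).surjective y
    obtain ⟨v, rfl⟩ := ih (A.step s x).2
    exact ⟨x :: v, rfl⟩

end Words

section LevelConnected

variable {S X : Type*} (A : Mealy S X)

/-- `T` meets level `m` in a union of connected components of the Schreier graph, whose edges lead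
from `v` to `s(v)` for every state `s`. -/
def InvariantOn (m : ℕ) (T : Set (List X)) : Prop :=
  ∀ s v, v.length = m → (A.act s v ∈ T ↔ v ∈ T)

/-- Connectedness of the Schreier graph of level `m`, phrased through its invariant sets of
vertices. -/
def LevelConnected (m : ℕ) : Prop :=
  ∀ T, A.InvariantOn m T → ∀ v u, v.length = m → u.length = m → v ∈ T → u ∈ T

variable {A}

theorem length_apply_of_mem_autGroup {g : Equiv.Perm (List X)} (hg : g ∈ A.autGroup) (w : List X) :
    (g w).length = w.length := by
  induction hg using Subgroup.closure_induction generalizing w with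
  | mem g hg => obtain ⟨s, hs⟩ := hg; simp [hs]
  | one => rfl
  | mul g₁ g₂ _ _ ih₁ ih₂ => exact (ih₁ (g₂ w)).trans (ih₂ w)
  | inv g _ ih => simpa using (ih (g⁻¹ w)).symm

theorem InvariantOn.apply_mem_iff {m : ℕ} {T : Set (List X)} (hT : A.InvariantOn m T)
    {g : Equiv.Perm (List X)} (hg : g ∈ A.autGroup) {w : List X} (hw : w.length = m) :
    g w ∈ T ↔ w ∈ T := by
  induction hg using Subgroup.closure_induction generalizing w with
  | mem g hg => obtain ⟨s, hs⟩ := hg; rw [hs, hT s w hw]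
  | one => rfl
  | mul g₁ g₂ _ hg₂ ih₁ ih₂ =>
    exact (ih₁ ((length_apply_of_mem_autGroup hg₂ w).trans hw)).trans (ih₂ hw)
  | inv g hg ih => simpa using (ih ((length_apply_of_mem_autGroup (inv_mem hg) w).trans hw)).symm

theorem Invertible.levelTransitive_iff (hA : A.Invertible) :
    A.LevelTransitive ↔ ∀ m, A.LevelConnected m := by
  constructor
  · intro h m T hT v u hv hu hvT
    obtain ⟨g, hg, rfl⟩ := h v u (hv.trans hu.symm)
    exact (hT.apply_mem_iff hg hv).mpr hvT
  · intro h v u hvu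
    refine h v.length {w | ∃ g ∈ A.autGroup, g v = w} ?_ v u rfl hvu.symm ⟨1, one_mem _, rfl⟩
    intro s w _
    let a : Equiv.Perm (List X) := .ofBijective (A.act s) ⟨hA.act_injective s, hA.act_surjective s⟩
    have ha : a ∈ A.autGroup := Subgroup.subset_closure ⟨s, fun _ => rfl⟩
    constructor
    · rintro ⟨g, hg, hgw⟩
      exact ⟨a⁻¹ * g, mul_mem (inv_mem ha) hg, by
        rw [Equiv.Perm.mul_apply, hgw, Equiv.Perm.inv_eq_iff_eq]; rfl⟩
    · rintro ⟨g, hg, rfl⟩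
      exact ⟨a * g, mul_mem ha hg, rfl⟩

theorem InvariantOn.mem_iff_of_eEquiv {m : ℕ} {T : Set (List X)} (hT : A.InvariantOn m T)
    {v u : List X} (h : A.EEquiv v u) (hv : v.length = m) : v ∈ T ↔ u ∈ T := by
  induction h with
  | rel v u h =>
    obtain ⟨s, ⟨_, rfl⟩ | ⟨_, rfl⟩⟩ := h
    · exact (hT s v hv).symm
    · exact hT s u (by simpa using hv)
  | refl v => rfl
  | symm v u h ih => exact (ih ((EEquiv.length_eq h).trans hv)).symm
  | trans v u w h _ ih₁ ih₂ => exact (ih₁ hv).trans (ih₂ ((EEquiv.length_eq h).symm.trans hv))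

end LevelConnected

/-! ### Transfer of connectedness between levels -/

section Transfer

variable {S X K : Type*} (A : Mealy S X)

/-- The colouring `c` of the words of length `m` tells apart words that are not `e`-equivalent. -/
def Separates (c : List X → K) (m : ℕ) : Prop :=
  ∀ v w, v.length = m → w.length = m → c v = c w → A.EEquiv v w

/-- The part of level `m` that governs the deeper levels: which colours occur, and, for every
edge `w → s(w)`, the colours of its endpoints together with the section `s|_w` through which it
acts on the continuations of `w`. -/
def levelPattern (c : List X → K) (m : ℕ) : Set K × Set (K × S × K) :=
  (c '' {w | w.length = m},
    {e | ∃ s w, w.length = m ∧ (c w, A.sec s w, c (A.act s w)) = e})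

variable {A}

/-- The words whose prefix of length `i` can be exchanged for one of length `j` of the same colour
so as to land in `T`. -/
def exchangePrefix (c c' : List X → K) (i j : ℕ) (T : Set (List X)) : Set (List X) :=
  {a | ∃ w', w'.length = j ∧ c' w' = c (a.take i) ∧ w' ++ a.drop i ∈ T}

theorem append_mem_exchangePrefix_iff {c c' : List X → K} {i j d : ℕ} {T : Set (List X)}
    (hc' : A.Separates c' j) (hT : A.InvariantOn (j + d) T) {w w' z : List X}
    (hw : w.length = i) (hw' : w'.length = j) (hz : z.length = d) (h : c w = c' w') :
    w ++ z ∈ exchangePrefix c c' i j T ↔ w' ++ z ∈ T := by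
  subst hw
  simp only [exchangePrefix, Set.mem_ofPred_eq, List.take_left, List.drop_left]
  constructor
  · rintro ⟨w'', hw'', hcw, hmem⟩
    have hequiv : A.EEquiv w'' w' := hc' _ _ hw'' hw' (hcw.trans h)
    exact (hT.mem_iff_of_eEquiv (hequiv.append z) (by simp [hw'', hz])).mp hmem
  · exact fun hmem => ⟨w', hw', h.symm, hmem⟩

theorem InvariantOn.of_levelPattern_eq {c c' : List X → K} {i j d : ℕ} {T : Set (List X)}
    (hc' : A.Separates c' j) (hpat : A.levelPattern c i = A.levelPattern c' j)
    (hT : A.InvariantOn (j + d) T) :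
    A.InvariantOn (i + d) (exchangePrefix c c' i j T) := by
  intro s a ha
  obtain ⟨w, z, hw, hz, rfl⟩ : ∃ w z, w.length = i ∧ z.length = d ∧ w ++ z = a :=
    ⟨a.take i, a.drop i, by simp [ha], by simp [ha], List.take_append_drop i a⟩
  have hedge : (c w, A.sec s w, c (A.act s w)) ∈ (A.levelPattern c i).2 := ⟨s, w, hw, rfl⟩
  rw [hpat] at hedge
  obtain ⟨s', w', hw', he⟩ := hedge
  obtain ⟨hsource, hsec, htarget⟩ :
      c' w' = c w ∧ A.sec s' w' = A.sec s w ∧ c' (A.act s' w') = c (A.act s w) := by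
    simpa only [Prod.mk.injEq] using he
  rw [act_append, append_mem_exchangePrefix_iff hc' hT hw hw' hz hsource.symm,
    append_mem_exchangePrefix_iff hc' hT (by simpa using hw) (by simpa using hw')
      (by simpa using hz) htarget.symm, ← hsec, ← act_append]
  exact hT s' _ (by simp [hw', hz])

theorem LevelConnected.transfer {c c' : List X → K} {i j d : ℕ} (hc' : A.Separates c' j)
    (hpat : A.levelPattern c i = A.levelPattern c' j) (h : A.LevelConnected (i + d)) :
    A.LevelConnected (j + d) := by
  intro T hT
  have hmatch : ∀ a', a'.length = j + d →
      ∃ a, a.length = i + d ∧ (a ∈ exchangePrefix c c' i j T ↔ a' ∈ T) := by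
    intro a' ha'
    have hcolour : c' (a'.take j) ∈ (A.levelPattern c' j).1 :=
      ⟨a'.take j, by simp [ha'], rfl⟩
    rw [← hpat] at hcolour
    obtain ⟨w, hw, hcw⟩ := hcolour
    have hd : (a'.drop j).length = d := by simp [ha']
    refine ⟨w ++ a'.drop j, by rw [List.length_append, hw, hd], ?_⟩
    rw [append_mem_exchangePrefix_iff hc' hT hw (by simp [ha']) hd hcw, List.take_append_drop]
  intro v u hv hu
  obtain ⟨v', hv', hvT⟩ := hmatch v hv
  obtain ⟨u', hu', huT⟩ := hmatch u hu
  rw [← hvT, ← huT]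
  exact h _ (hT.of_levelPattern_eq hc' hpat) v' u' hv' hu'

theorem levelConnected_of_le_card [Finite S] [Finite K] (c : ℕ → List X → K)
    (hc : ∀ m, A.LevelConnected m → A.Separates (c m) m)
    (h : ∀ m ≤ Nat.card (Set K × Set (K × S × K)), A.LevelConnected m) (m : ℕ) :
    A.LevelConnected m := by
  set B := Nat.card (Set K × Set (K × S × K))
  induction m using Nat.strong_induction_on with
  | _ m ih =>
    rcases le_or_gt m B with hm | hm
    · exact h m hm
    obtain ⟨i, j, hij, hj, hpat⟩ := exists_lt_le_card_map_eq fun i => A.levelPattern (c i) i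
    have hprev : A.LevelConnected (i + (m - j)) := ih _ (by omega)
    have := hprev.transfer (hc j (h j hj)) hpat
    rwa [Nat.add_sub_cancel' (by omega)] at this

end Transfer

section Boundary

variable {S X L : Type*} (A : Mealy S X)

/-- The two endpoints `v` and `s(v)` of the edge of the Schreier graph given by `s` and `v`. -/
def endpoint (b : Bool) (s : S) (v : List X) : List X := bif b then A.act s v else v

/-- Edges along which the section is non-trivial; all other edges stay inside an `e`-class. -/
def IsBoundaryEdge (m : ℕ) (s : S) (v : List X) : Prop :=
  v.length = m ∧ ¬A.IsTrivialState (A.sec s v)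

variable {A}

theorem LevelConnected.exists_boundaryEdge {m : ℕ} (h : A.LevelConnected m) {w v : List X}
    (hw : w.length = m) (hv : v.length = m) (hwv : ¬A.EEquiv w v) :
    ∃ b s u, A.IsBoundaryEdge m s u ∧ A.EEquiv w (A.endpoint b s u) := by
  by_contra! hno
  refine hwv (h {u | A.EEquiv w u} ?_ w v hw hv (.refl _))
  intro s u hu
  by_cases htriv : A.IsTrivialState (A.sec s u)
  · exact ⟨fun h => h.trans _ _ _ (.symm _ _ (eEquiv_act htriv)),
      fun h => h.trans _ _ _ (eEquiv_act htriv)⟩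
  · exact iff_of_false (hno true s u ⟨hu, htriv⟩) (hno false s u ⟨hu, htriv⟩)

theorem LevelConnected.exists_separates {m : ℕ} (h : A.LevelConnected m) (label : S → List X → L)
    (hlabel : ∀ s v s' v', A.IsBoundaryEdge m s v → A.IsBoundaryEdge m s' v' →
      label s v = label s' v' → s = s' ∧ v = v') :
    ∃ c : List X → Option (Bool × L), A.Separates c m := by
  classical
  let Attached (w : List X) : Prop :=
    ∃ b s u, A.IsBoundaryEdge m s u ∧ A.EEquiv w (A.endpoint b s u)
  have hcolour : ∀ w, ∃ o : Option (Bool × L), (o = none → ¬Attached w) ∧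
      ∀ b l, o = some (b, l) → ∃ s u, l = label s u ∧ A.IsBoundaryEdge m s u ∧
        A.EEquiv w (A.endpoint b s u) := by
    intro w
    by_cases hw : Attached w
    · obtain ⟨b, s, u, hu⟩ := hw
      exact ⟨some (b, label s u), by simp, by rintro _ _ ⟨⟩; exact ⟨s, u, rfl, hu⟩⟩
    · exact ⟨none, fun _ => hw, by simp⟩
  choose c hnone hsome using hcolour
  refine ⟨c, fun v w hv hw hvw => ?_⟩
  rcases hcv : c v with _ | ⟨b, l⟩
  · by_contra hne
    exact hnone v hcv (h.exists_boundaryEdge hv hw hne)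
  · obtain ⟨s, u, hl, hu, hvu⟩ := hsome v b l hcv
    obtain ⟨s', u', hl', hu', hwu'⟩ := hsome w b l (hvw ▸ hcv)
    obtain ⟨rfl, rfl⟩ := hlabel s u s' u' hu hu' (hl.symm.trans hl')
    exact hvu.trans _ _ _ hwu'.symm

end Boundary

/-! ### Edges with non-trivial section in bounded automata -/

section LeftPaths

open Stream'

variable {S X : Type*} (A : Mealy S X)

/-- Some non-empty word leads from the state `t` back to `t`. -/
def OnCycle (t : S) : Prop := ∃ z ≠ [], A.sec t z = t

/-- The left-infinite word `…x₂x₁`, encoded as the stream `p` of the letters `x₁, x₂, …`, labels a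
path of `A` ending at `t`. In this encoding `…x₂x₁` followed by the word `y` is
`y.reverse ++ₛ p`. -/
def IsLeftPath (p : Stream' X) (t : S) : Prop :=
  ∃ σ : Stream' S, σ.get 0 = t ∧ ∀ n, (A.step (σ.get (n + 1)) (p.get n)).2 = σ.get n

variable {A}

theorem IsLeftPath.append {p : Stream' X} {t : S} (h : A.IsLeftPath p t) (y : List X) :
    A.IsLeftPath (y.reverse ++ₛ p) (A.sec t y) := by
  induction y generalizing p t with
  | nil => exact h
  | cons x y ih =>
    obtain ⟨σ, rfl, hσ⟩ := h
    have hx : A.IsLeftPath (Stream'.cons x p) (A.step (σ.get 0) x).2 :=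
      ⟨Stream'.cons (A.step (σ.get 0) x).2 σ, rfl, fun n => by cases n <;> simp [get_succ_cons, hσ]⟩
    simpa [append_append_stream, sec] using ih hx

theorem OnCycle.exists_isLeftPath {t : S} (h : A.OnCycle t) : ∃ p, A.IsLeftPath p t := by
  have hpred : ∀ s : {s // A.OnCycle s}, ∃ (r : {s // A.OnCycle s}) (x : X),
      (A.step r.1 x).2 = s.1 := by
    rintro ⟨s, z, hz, hs⟩
    obtain ⟨y, x, rfl⟩ := List.eq_nil_or_concat z |>.resolve_left hz
    rw [List.concat_eq_append, sec_append] at hs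
    refine ⟨⟨A.sec s y, x :: y, by simp, ?_⟩, x, hs⟩
    exact congrArg (A.sec · y) hs
  choose pred letter hpred using hpred
  let σ (n : ℕ) := pred^[n] ⟨t, h⟩
  refine ⟨fun n => letter (σ n), fun n => (σ n).1, rfl, fun n => ?_⟩
  have hσ : σ (n + 1) = pred (σ n) := Function.iterate_succ_apply' ..
  exact (congrArg (fun r => (A.step r.1 (letter (σ n))).2) hσ).trans (hpred (σ n))

theorem IsLeftPath.mem_postCriticalSet {p : Stream' X} {t : S} (h : A.IsLeftPath p t)
    (ht : ¬A.IsTrivialState t) : p ∈ A.PostCriticalSet := by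
  obtain ⟨σ, rfl, hσ⟩ := h
  exact ⟨σ, p, fun n => (A.step (σ (n + 1)) (p n)).1, fun n => Prod.ext rfl (hσ n), ht, .inl rfl⟩

theorem Bounded.exists_periodic (hA : A.Bounded) {p : Stream' X} {t : S} (hp : A.IsLeftPath p t)
    (hcyc : A.OnCycle t) (ht : ¬A.IsTrivialState t) : ∃ D > 0, Function.Periodic p.get D := by
  obtain ⟨z, hz, hzt⟩ := hcyc
  let f (q : Stream' X) : Stream' X := z.reverse ++ₛ q
  have hleft : Function.LeftInverse (drop z.length) f := fun q => by
    simpa using drop_append_stream z.reverse q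
  have hpath (i : ℕ) : A.IsLeftPath (f^[i] p) t := by
    induction i with
    | zero => exact hp
    | succ i ih => rw [Function.iterate_succ_apply', ← hzt]; exact ih.append z
  obtain ⟨i, j, hij, heq⟩ := Set.Finite.exists_lt_map_eq_of_forall_mem
    (fun i => (hpath i).mem_postCriticalSet ht) hA
  have hfix : f^[j - i] p = p := Function.iterate_cancel hleft.injective heq.symm
  have hdrop (k : ℕ) (q : Stream' X) : (drop z.length)^[k] q = drop (k * z.length) q := by
    induction k with
    | zero => simp
    | succ k ih => rw [Function.iterate_succ_apply', ih, drop_drop, Nat.succ_mul]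
  have hperiod : drop ((j - i) * z.length) p = p := by
    rw [← hdrop]
    exact (congrArg _ hfix.symm).trans (hleft.iterate (j - i) p)
  refine ⟨(j - i) * z.length, Nat.mul_pos (by omega) (List.length_pos_iff.mpr hz), fun m => ?_⟩
  rw [Nat.add_comm, ← get_drop, hperiod]

theorem Bounded.exists_getElem?_eq_get (hA : A.Bounded) {p : Stream' X} {t : S}
    (hp : A.IsLeftPath p t) {v : List X} (hcyc : A.OnCycle (A.sec t v))
    (hv : ¬A.IsTrivialState (A.sec t v)) :
    ∃ D > 0, ∀ N, D ∣ N → ∀ i < v.length, i < N → v[i]? = some (p.get (N - 1 - i)) := by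
  obtain ⟨D, hD, hper⟩ := hA.exists_periodic (hp.append v) hcyc hv
  refine ⟨D, hD, ?_⟩
  rintro _ ⟨M, rfl⟩ i hi hiN
  have hleft : (v.reverse ++ₛ p).get (v.length - 1 - i) = v[i] := by
    rw [get_append_left _ _ _ (by simp; omega), List.getElem_reverse]
    congr 1
    omega
  have hright : (v.reverse ++ₛ p).get (v.length - 1 - i + M * D) = p.get (D * M - 1 - i) := by
    rw [← get_append_right (D * M - 1 - i) v.reverse p, List.length_reverse]
    congr 1
    have := mul_comm D M
    omega
  rw [List.getElem?_eq_getElem hi, ← hleft, ← hright]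
  exact congrArg some (hper.nat_mul M _).symm

theorem Bounded.prefix_of_onCycle (hA : A.Bounded) {t : S} (ht : A.OnCycle t) {v v' : List X}
    (hle : v.length ≤ v'.length)
    (hcyc : A.OnCycle (A.sec t v)) (hv : ¬A.IsTrivialState (A.sec t v))
    (hcyc' : A.OnCycle (A.sec t v')) (hv' : ¬A.IsTrivialState (A.sec t v')) : v <+: v' := by
  obtain ⟨p, hp⟩ := ht.exists_isLeftPath
  obtain ⟨D, hD, hget⟩ := hA.exists_getElem?_eq_get hp hcyc hv
  obtain ⟨D', hD', hget'⟩ := hA.exists_getElem?_eq_get hp hcyc' hv'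
  have hN : v.length < D * D' * (v.length + 1) :=
    Nat.lt_of_succ_le (Nat.le_mul_of_pos_left _ (Nat.mul_pos hD hD'))
  rw [List.prefix_iff_getElem?]
  intro i hi
  rw [hget' (D * D' * (v.length + 1)) ⟨D * (v.length + 1), by ring⟩ i (by omega) (by omega),
    ← hget (D * D' * (v.length + 1)) ⟨D' * (v.length + 1), by ring⟩ i hi (by omega),
    List.getElem?_eq_getElem hi]

end LeftPaths

section Labels

variable {S X : Type*} {A : Mealy S X}

theorem exists_onCycle_sec [Finite S] (s : S) {w : List X} (hw : Nat.card S ≤ w.length) :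
    ∃ w₁ w₂, w₁ ++ w₂ = w ∧ A.OnCycle (A.sec s w₁) := by
  obtain ⟨i, j, hij, hj, heq⟩ := exists_lt_le_card_map_eq fun i => A.sec s (w.take i)
  refine ⟨w.take i, w.drop i, List.take_append_drop .., (w.take j).drop i, ?_, ?_⟩
  · rw [← List.length_pos_iff, List.length_drop, List.length_take]
    omega
  · have htake : w.take i ++ (w.take j).drop i = w.take j := by
      conv_rhs => rw [← List.take_append_drop i (w.take j), List.take_take, min_eq_left (by omega)]
    rw [← sec_append, htake, heq]

theorem Bounded.eq_of_common_ends [Finite S] (hA : A.Bounded) {s : S} {x y v v' : List X}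
    (hx : Nat.card S ≤ x.length) (hy : Nat.card S ≤ y.length) (hlen : v.length = v'.length)
    (hv : ¬A.IsTrivialState (A.sec s (x ++ v ++ y)))
    (hv' : ¬A.IsTrivialState (A.sec s (x ++ v' ++ y))) : v = v' := by
  obtain ⟨x₁, x₂, rfl, hx₁⟩ := exists_onCycle_sec (A := A) s hx
  have hmid (u : List X) (hu : ¬A.IsTrivialState (A.sec s (x₁ ++ x₂ ++ u ++ y))) :
      ∃ z, A.OnCycle (A.sec (A.sec s x₁) (x₂ ++ u ++ z)) ∧
        ¬A.IsTrivialState (A.sec (A.sec s x₁) (x₂ ++ u ++ z)) := by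
    obtain ⟨z, z', rfl, hz⟩ := exists_onCycle_sec (A := A) (A.sec s (x₁ ++ x₂ ++ u)) hy
    refine ⟨z, by simpa only [← sec_append, List.append_assoc] using hz, fun htriv => hu ?_⟩
    simpa only [← sec_append, List.append_assoc] using htriv.sec z'
  obtain ⟨z, hz, hzv⟩ := hmid v hv
  obtain ⟨z', hz', hzv'⟩ := hmid v' hv'
  have hcancel {u u' r r' : List X} (hlen : u.length = u'.length)
      (h : x₂ ++ u ++ r <+: x₂ ++ u' ++ r') : u = u' := by
    obtain ⟨e, he⟩ := h
    simp only [List.append_assoc, List.append_cancel_left_eq] at he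
    exact (List.append_inj he hlen).1
  rcases le_total z.length z'.length with hle | hle
  · exact hcancel hlen (hA.prefix_of_onCycle hx₁ (by simp; omega) hz hzv hz' hzv')
  · exact (hcancel hlen.symm (hA.prefix_of_onCycle hx₁ (by simp; omega) hz' hzv' hz hzv)).symm

/-- The label by which a boundary edge of a given level is recognised: its state, and the first
and the last `n` letters of its word (all of them, if there are fewer than `n`). -/
def edgeLabel (n : ℕ) (s : S) (v : List X) : S × (Fin n → Option X) × (Fin n → Option X) :=
  (s, fun a => v[(a : ℕ)]?, fun a => v.reverse[(a : ℕ)]?)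

theorem Bounded.eq_of_edgeLabel_eq [Finite S] (hA : A.Bounded) {m : ℕ} {s s' : S} {v v' : List X}
    (hv : A.IsBoundaryEdge m s v) (hv' : A.IsBoundaryEdge m s' v')
    (h : edgeLabel (Nat.card S) s v = edgeLabel (Nat.card S) s' v') : s = s' ∧ v = v' := by
  set n := Nat.card S
  simp only [edgeLabel, Prod.mk.injEq] at h
  obtain ⟨rfl, hfirst, hlast⟩ := h
  refine ⟨rfl, ?_⟩
  obtain ⟨hlen, hnontriv⟩ := hv
  obtain ⟨hlen', hnontriv'⟩ := hv'
  have htake : v.take n = v'.take n :=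
    take_eq_take_of_getElem?_eq fun i hi => congrFun hfirst ⟨i, hi⟩
  have hdrop : v.drop (m - n) = v'.drop (m - n) := by
    have := take_eq_take_of_getElem?_eq fun i hi => congrFun hlast ⟨i, hi⟩
    rwa [List.take_reverse, List.take_reverse, List.reverse_inj, hlen, hlen'] at this
  rcases le_total m (n + n) with hm | hm
  · have hdrop' : v.drop n = v'.drop n := by
      simpa [show m - n + (n - (m - n)) = n by omega] using congrArg (List.drop (n - (m - n))) hdrop
    rw [← List.take_append_drop n v, htake, hdrop', List.take_append_drop]
  · have hsplit (u : List X) :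
        u.take n ++ (u.drop n).take (m - (n + n)) ++ u.drop (m - n) = u := by
      rw [List.append_assoc, show m - n = n + (m - (n + n)) by omega, ← List.drop_drop,
        List.take_append_drop, List.take_append_drop]
    have hmiddle : (v.drop n).take (m - (n + n)) = (v'.drop n).take (m - (n + n)) :=
      hA.eq_of_common_ends (s := s) (x := v.take n) (y := v.drop (m - n)) (by simp; omega)
        (by simp; omega) (by simp [hlen, hlen']) (by rwa [hsplit])
        (by rwa [htake, hdrop, hsplit])
    rw [← hsplit v, htake, hmiddle, hdrop, hsplit]

/-- The number of colours that suffice to separate the `e`-classes of a connected level of a bounded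
automaton with `n` states and `k` letters: one for each endpoint of each edge label, and one more
for a level that is a single `e`-class. -/
def numColours (n k : ℕ) : ℕ := 2 * (n * ((k + 1) ^ n * (k + 1) ^ n)) + 1

/-- A bounded automaton with `n` states and `k` letters all of whose levels up to this one are
connected has only connected levels: it is the number of conceivable level patterns. -/
def levelBound (n k : ℕ) : ℕ :=
  2 ^ numColours n k * 2 ^ (numColours n k * (n * numColours n k))

theorem Bounded.levelConnected [Finite S] [Finite X] (hA : A.Bounded)
    (h : ∀ m ≤ levelBound (Nat.card S) (Nat.card X), A.LevelConnected m) (m : ℕ) :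
    A.LevelConnected m := by
  have hcolour (m : ℕ) (hm : A.LevelConnected m) :=
    hm.exists_separates (edgeLabel (Nat.card S)) fun _ _ _ _ => hA.eq_of_edgeLabel_eq
  choose! c hc using hcolour
  refine levelConnected_of_le_card c hc (fun m hm => h m (hm.trans_eq ?_)) m
  have := Fintype.ofFinite S
  have := Fintype.ofFinite X
  simp [levelBound, numColours, Nat.card_eq_fintype_card]

end Labels

end Mealy

/-! ### Computability -/

section Primrec

open Primrec

theorem primrec_pow : Primrec₂ ((· ^ ·) : ℕ → ℕ → ℕ) :=
  Primrec₂.unpaired'.1 Nat.Primrec.pow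

theorem primrec_sublists' {α : Type*} [Primcodable α] :
    Primrec (List.sublists' : List α → List (List α)) := by
  have hstep : Primrec₂ fun (_ : List α) (p : α × List (List α)) => p.2 ++ p.2.map (p.1 :: ·) :=
    list_append.comp (snd.comp snd) (list_map (snd.comp snd)
      (list_cons.comp (fst.comp (snd.comp fst)) snd))
  refine (list_foldr Primrec.id (const [[]]) hstep).of_eq fun l => ?_
  induction l with
  | nil => rfl
  | cons a l ih => rw [List.sublists'_cons, ← ih]; rfl

theorem primrecRel_mem {α : Type*} [Primcodable α] :
    PrimrecRel fun (a : α) (l : List α) => a ∈ l :=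
  ((PrimrecRel.exists_mem_list Primrec.eq).comp snd fst).of_eq (by simp)

variable {α β : Type*} [Primcodable α] [Primcodable β]

theorem primrecPred_imp {p q : α → Prop} (hp : PrimrecPred p) (hq : PrimrecPred q) :
    PrimrecPred fun a => p a → q a :=
  (hp.not.or hq).of_eq fun _ => imp_iff_not_or.symm

theorem primrecPred_iff {p q : α → Prop} (hp : PrimrecPred p) (hq : PrimrecPred q) :
    PrimrecPred fun a => p a ↔ q a :=
  ((primrecPred_imp hp hq).and (primrecPred_imp hq hp)).of_eq fun _ => iff_def.symm

theorem primrecPred_forall_mem {l : α → List β} {p : α → β → Prop} (hl : Primrec l)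
    (hp : PrimrecRel p) : PrimrecPred fun a => ∀ b ∈ l a, p a b :=
  hp.swap.forall_mem_list.comp hl Primrec.id

theorem primrecPred_forall_lt {N : α → ℕ} {p : α → ℕ → Prop} (hN : Primrec N)
    (hp : PrimrecRel p) : PrimrecPred fun a => ∀ b < N a, p a b :=
  (primrecPred_forall_mem (list_range.comp hN) hp).of_eq (by simp)

end Primrec

namespace AutCode

/-- The number of states of the automaton with code `c`. -/
def numStates (c : ℕ) : ℕ := c.unpair.1

/-- The number of letters of the automaton with code `c`. -/
def numLetters (c : ℕ) : ℕ := c.unpair.2.unpair.1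

/-- The transition table of the automaton with code `c`, state by state. -/
def table (c : ℕ) : List ℕ := (Encodable.decode c.unpair.2.unpair.2).getD []

/-- The automaton with code `c`, its states and letters regarded as natural numbers; looking up a
state or letter that is not there gives a junk value. -/
def decodeAut (c : ℕ) : Mealy ℕ ℕ where
  step s x := ((table c).getD (s * numLetters c + x) 0).unpair

/-- All words of length `m` over the letters `0, …, k - 1`. -/
def words (k m : ℕ) : List (List ℕ) :=
  (fun W => W.flatMap fun v => (List.range k).map (· :: v))^[m] [[]]

/-- Connectedness of level `m` of the automaton with code `c` as a finite search: the invariant sets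
run through the sublists of a list of all words of length `m`. -/
def LevelTest (c m : ℕ) : Prop :=
  ∀ T ∈ (words (numLetters c) m).sublists',
    (∀ v ∈ words (numLetters c) m, ∀ s < numStates c, ((decodeAut c).act s v ∈ T ↔ v ∈ T)) →
      ∀ v ∈ words (numLetters c) m, ∀ u ∈ words (numLetters c) m, v ∈ T → u ∈ T

/-- All levels up to the bound pass the test; for codes of bounded invertible automata this is
level-transitivity. -/
def TransitivityTest (c : ℕ) : Prop :=
  ∀ m ≤ Mealy.levelBound (numStates c) (numLetters c), LevelTest c m

section Correctness

variable {n k : ℕ} (step : Fin n → Fin k → Fin k × Fin n)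

@[simp]
theorem numStates_encodeAut : numStates (encodeAut n k step) = n := by
  simp [numStates, encodeAut]

@[simp]
theorem numLetters_encodeAut : numLetters (encodeAut n k step) = k := by
  simp [numLetters, encodeAut]

theorem decodeAut_encodeAut_step (s : Fin n) (x : Fin k) :
    (decodeAut (encodeAut n k step)).step s x = ((step s x).1.val, (step s x).2.val) := by
  have htable : table (encodeAut n k step) = (List.finRange n).flatMap fun s =>
      (List.finRange k).map fun x => Nat.pair (step s x).1 (step s x).2 := by
    simp [table, encodeAut]
  simp only [decodeAut]
  rw [htable, numLetters_encodeAut, getD_flatMap_of_length_eq _ _ (by simp) (by simp) x.2]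
  simp

theorem decodeAut_encodeAut_act (s : Fin n) (v : List (Fin k)) :
    (decodeAut (encodeAut n k step)).act s (v.map Fin.val) =
      ((Mealy.mk step).act s v).map Fin.val :=
  Mealy.act_map _ _ Fin.val Fin.val (decodeAut_encodeAut_step step) s v

theorem mem_words {m : ℕ} {w : List ℕ} :
    w ∈ words k m ↔ ∃ v : List (Fin k), v.length = m ∧ v.map Fin.val = w := by
  induction m generalizing w with
  | zero => simp [words, List.length_eq_zero_iff, eq_comm]
  | succ m ih =>
    have hsucc : words k (m + 1) = (words k m).flatMap fun v => (List.range k).map (· :: v) :=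
      Function.iterate_succ_apply' ..
    simp only [hsucc, List.mem_flatMap, ih, List.mem_map, List.mem_range]
    constructor
    · rintro ⟨_, ⟨v, rfl, rfl⟩, x, hx, rfl⟩
      exact ⟨⟨x, hx⟩ :: v, rfl, rfl⟩
    · rintro ⟨_ | ⟨x, v⟩, hv, rfl⟩
      · simp at hv
      · exact ⟨_, ⟨v, by simpa using hv, rfl⟩, x, x.2, rfl⟩

theorem levelTest_encodeAut (m : ℕ) :
    LevelTest (encodeAut n k step) m ↔ (Mealy.mk step).LevelConnected m := by
  classical
  simp only [LevelTest, numLetters_encodeAut, numStates_encodeAut, List.mem_sublists']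
  constructor
  · intro h T hT v u hv hu
    have hmem (w : List (Fin k)) (hw : w.length = m) : w.map Fin.val ∈
        (words k m).filter (fun a => ∃ w ∈ T, w.map Fin.val = a) ↔ w ∈ T := by
      rw [List.mem_filter, decide_eq_true_iff]
      constructor
      · rintro ⟨_, w', hw', heq⟩
        rwa [← List.map_injective_iff.mpr Fin.val_injective heq]
      · exact fun hwT => ⟨mem_words.mpr ⟨w, hw, rfl⟩, w, hwT, rfl⟩
    rw [← hmem v hv, ← hmem u hu]
    refine h _ List.filter_sublist ?_ _ (mem_words.mpr ⟨v, hv, rfl⟩) _ (mem_words.mpr ⟨u, hu, rfl⟩)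
    intro w hw s hs
    obtain ⟨w, hlen, rfl⟩ := mem_words.mp hw
    rw [decodeAut_encodeAut_act step ⟨s, hs⟩, hmem w hlen, hmem _ (by simpa using hlen)]
    exact hT ⟨s, hs⟩ w hlen
  · intro h T _ hT v hv u hu
    obtain ⟨v, hlenv, rfl⟩ := mem_words.mp hv
    obtain ⟨u, hlenu, rfl⟩ := mem_words.mp hu
    refine h {w | w.map Fin.val ∈ T} (fun s w hw => ?_) v u hlenv hlenu
    have := hT _ (mem_words.mpr ⟨w, hw, rfl⟩) s s.2
    rwa [decodeAut_encodeAut_act] at this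

theorem transitivityTest_encodeAut (hinv : (Mealy.mk step).Invertible)
    (hbdd : (Mealy.mk step).Bounded) :
    TransitivityTest (encodeAut n k step) ↔ (Mealy.mk step).LevelTransitive := by
  rw [hinv.levelTransitive_iff, TransitivityTest, numStates_encodeAut, numLetters_encodeAut]
  simp only [levelTest_encodeAut]
  refine ⟨fun h => hbdd.levelConnected fun m hm => h m ?_, fun h m _ => h m⟩
  simpa only [Nat.card_fin] using hm

end Correctness

section Computability

open Primrec

theorem primrec_numStates : Primrec numStates := fst.comp unpair

theorem primrec_numLetters : Primrec numLetters := fst.comp (unpair.comp (snd.comp unpair))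

theorem primrec_table : Primrec table :=
  option_getD.comp (Primrec.decode.comp (snd.comp (unpair.comp (snd.comp unpair)))) (const [])

theorem primrec_step {α : Type*} [Primcodable α] {c s x : α → ℕ} (hc : Primrec c)
    (hs : Primrec s) (hx : Primrec x) : Primrec fun a => (decodeAut (c a)).step (s a) (x a) :=
  unpair.comp ((list_getD 0).comp (primrec_table.comp hc)
    (nat_add.comp (nat_mul.comp hs (primrec_numLetters.comp hc)) hx))

theorem primrec_act {α : Type*} [Primcodable α] {c s : α → ℕ} {v : α → List ℕ} (hc : Primrec c)
    (hs : Primrec s) (hv : Primrec v) : Primrec fun a => (decodeAut (c a)).act (s a) (v a) := by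
  have hstep : Primrec fun p : α × (ℕ × List ℕ) × ℕ => (decodeAut (c p.1)).step p.2.1.1 p.2.2 :=
    primrec_step (hc.comp fst) (fst.comp (fst.comp snd)) (snd.comp snd)
  have hnext : Primrec₂ fun (a : α) (p : (ℕ × List ℕ) × ℕ) =>
      (((decodeAut (c a)).step p.1.1 p.2).2, p.1.2 ++ [((decodeAut (c a)).step p.1.1 p.2).1]) :=
    (snd.comp hstep).pair (list_concat.comp (snd.comp (fst.comp snd)) (fst.comp hstep))
  refine (snd.comp (list_foldl hv (hs.pair (const [])) hnext)).of_eq fun a => ?_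
  rw [← Mealy.sec_act_eq_foldl]

theorem primrec_words : Primrec₂ words := by
  refine nat_iterate snd (const [[]]) ?_
  exact list_flatMap snd (list_map (list_range.comp (fst.comp (fst.comp fst)))
    (list_cons.comp snd (snd.comp fst)))

theorem primrecRel_levelTest : PrimrecRel LevelTest := by
  have hwords : Primrec fun p : ℕ × ℕ => words (numLetters p.1) p.2 :=
    primrec_words.comp (primrec_numLetters.comp fst) snd
  have hinvariant : PrimrecRel fun (p : ℕ × ℕ) (T : List (List ℕ)) =>
      ∀ v ∈ words (numLetters p.1) p.2, ∀ s < numStates p.1,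
        ((decodeAut p.1).act s v ∈ T ↔ v ∈ T) := by
    refine primrecPred_forall_mem (hwords.comp fst) (primrecPred_forall_lt
      (primrec_numStates.comp (fst.comp (fst.comp fst))) (primrecPred_iff ?_ ?_))
    · exact primrecRel_mem.comp (primrec_act (fst.comp (fst.comp (fst.comp fst))) snd
        (snd.comp fst)) (snd.comp (fst.comp fst))
    · exact primrecRel_mem.comp (snd.comp fst) (snd.comp (fst.comp fst))
  have htransfer : PrimrecRel fun (p : ℕ × ℕ) (T : List (List ℕ)) =>
      ∀ v ∈ words (numLetters p.1) p.2, ∀ u ∈ words (numLetters p.1) p.2, v ∈ T → u ∈ T := by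
    refine primrecPred_forall_mem (hwords.comp fst) (primrecPred_forall_mem
      (hwords.comp (fst.comp fst)) (primrecPred_imp ?_ ?_))
    · exact primrecRel_mem.comp (snd.comp fst) (snd.comp (fst.comp fst))
    · exact primrecRel_mem.comp snd (snd.comp (fst.comp fst))
  exact primrecPred_forall_mem (primrec_sublists'.comp hwords)
    (primrecPred_imp hinvariant htransfer)

theorem primrec_levelBound : Primrec₂ Mealy.levelBound := by
  have hpow : Primrec fun p : ℕ × ℕ => (p.2 + 1) ^ p.1 := primrec_pow.comp (succ.comp snd) fst
  have hcolours : Primrec fun p : ℕ × ℕ => Mealy.numColours p.1 p.2 :=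
    succ.comp (nat_mul.comp (const 2) (nat_mul.comp fst (nat_mul.comp hpow hpow)))
  exact nat_mul.comp (primrec_pow.comp (const 2) hcolours)
    (primrec_pow.comp (const 2) (nat_mul.comp hcolours (nat_mul.comp fst hcolours)))

theorem primrecPred_transitivityTest : PrimrecPred TransitivityTest :=
  (primrecPred_forall_lt
    (succ.comp (primrec_levelBound.comp primrec_numStates primrec_numLetters))
    primrecRel_levelTest).of_eq fun _ => by simp only [TransitivityTest, Nat.lt_succ_iff]

end Computability

end AutCode

/-- One can decide, given a bounded invertible Mealy automaton `A`,
whether the group `G_A` is level-transitive. -/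
theorem level_transitivity_decidable :
    ∃ F : ℕ → Bool, Computable F ∧
      ∀ (n k : ℕ) (step : Fin n → Fin k → Fin k × Fin n),
        2 ≤ k → (Mealy.mk step).Invertible → (Mealy.mk step).Bounded →
          (F (encodeAut n k step) = true ↔ (Mealy.mk step).LevelTransitive) := by
  classical
  refine ⟨fun c => decide (AutCode.TransitivityTest c),
    AutCode.primrecPred_transitivityTest.decide.to_comp, fun n k step _ hinv hbdd => ?_⟩
  rw [decide_eq_true_iff, AutCode.transitivityTest_encodeAut step hinv hbdd]
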